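/- arXiv:2305.00653 — 8 statements merged into one kernel-verified Lean document; each statement's English description precedes it below -/
import Mathlib

section
/- Let N ≥ 1, let S be a finite family of subsets p ⊆ {1,…,N} each with |p| ≥ 2, and for each p ∈ S and i ∈ p let α_{p→i} ∈ ℝ satisfy Σ_{i∈p} α_{p→i} = 0, and define F_i(x) = Σ_{p∈S : i∈p} α_{p→i} ∏_{j∈p\{i}} x_j. If x : ℝ → ℝ^N is differentiable and satisfies x_i'(t) = F_i(x(t)) for all t ∈ ℝ and all i, then the function t ↦ Σ_{i=1}^N x_i(t)² is constant. -/
/-- Along any solution of a system of ODEs solvable with the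
Koopman–von Neumann embedding (Definition 2 of the paper), the quantity
`∑ i, x_i(t)^2` is constant in time. -/
theorem koopman_vonNeumann_radius_conserved
    (N : ℕ) (hN : 1 ≤ N)
    (S : Finset (Finset (Fin N)))
    (α : Finset (Fin N) → Fin N → ℝ)
    (hcard : ∀ p ∈ S, 2 ≤ p.card)
    (hα : ∀ p ∈ S, ∑ i ∈ p, α p i = 0)
    (F : (Fin N → ℝ) → Fin N → ℝ)
    (hF : ∀ x i, F x i =
      ∑ p ∈ S.filter (fun p => i ∈ p), α p i * ∏ j ∈ p.erase i, x j)
    (x : ℝ → Fin N → ℝ)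
    (hx : ∀ (t : ℝ) (i : Fin N), HasDerivAt (fun s => x s i) (F (x t) i) t)
    (s t : ℝ) :
    ∑ i, (x s i) ^ 2 = ∑ i, (x t i) ^ 2 := by
  have key : ∀ y : Fin N → ℝ, ∑ i, y i * F y i = 0 := by
    intro y
    have h1 : ∀ i, y i * F y i = ∑ p ∈ S, if i ∈ p then α p i * ∏ j ∈ p, y j else 0 := by
      intro i
      rw [hF, Finset.mul_sum, Finset.sum_filter]
      refine Finset.sum_congr rfl fun p _ => ?_
      split_ifs with h
      · rw [← Finset.mul_prod_erase p y h]
        ring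
      · rfl
    simp_rw [h1]
    rw [Finset.sum_comm]
    refine Finset.sum_eq_zero fun p hp => ?_
    rw [← Finset.sum_filter, Finset.filter_univ_mem, ← Finset.sum_mul, hα p hp, zero_mul]
  have hd : ∀ u : ℝ, HasDerivAt (fun r => ∑ i, (x r i) ^ 2) 0 u := by
    intro u
    have h := HasDerivAt.fun_sum (u := Finset.univ) fun i _ => (hx u i).fun_pow 2
    refine h.congr_deriv (Eq.symm ?_)
    have h2 := key (x u)
    calc (0 : ℝ) = 2 * ∑ i, x u i * F (x u) i := by rw [h2, mul_zero]
      _ = _ := by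
        rw [Finset.mul_sum]
        refine Finset.sum_congr rfl fun i _ => ?_
        norm_num
        ring
  exact is_const_of_deriv_eq_zero (fun u => (hd u).differentiableAt) (fun u => (hd u).deriv) s t
end

section
/- Let ι be a finite type, deg : ι → ℕ, and d ≥ 1. Let A, B ∈ Matrix ι ι ℂ with A Hermitian, A_{jk} = 0 whenever deg j ≠ deg k, and B_{jk} = 0 whenever |deg j − deg k| > d. Let φ, ψ ∈ ℂ^ι be unit vectors with φ supported on {j : deg j = l} and ψ supported on {j : deg j = l'}. For t ∈ ℝ set H(t) = e^{𝕚At} B e^{−𝕚At}. Then for every n ∈ ℕ and all reals t₁,…,t_n: if n·d < |l − l'| then ⟨φ, H(t_n)⋯H(t₁) ψ⟩ = 0, and in all cases |⟨φ, H(t_n)⋯H(t₁) ψ⟩| ≤ ‖B‖ⁿ, where ‖B‖ is the ℓ² operator norm. -/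
open Matrix

/-- The interaction-picture operator `H(s) = e^{𝕚 A s} B e^{-𝕚 A s}`. -/
noncomputable def interactionPicture {ι : Type*} [Fintype ι] [DecidableEq ι]
    (A B : Matrix ι ι ℂ) (s : ℝ) : Matrix ι ι ℂ :=
  NormedSpace.exp ((Complex.I * (s : ℂ)) • A) * B *
    NormedSpace.exp ((-(Complex.I * (s : ℂ))) • A)

/-- A matrix shifting the degree by at most `w`. -/
def DegBand {ι : Type*} (deg : ι → ℕ) (w : ℕ) (M : Matrix ι ι ℂ) : Prop :=
  ∀ j k, (w : ℤ) < |(deg j : ℤ) - (deg k : ℤ)| → M j k = 0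

theorem DegBand.mul {ι : Type*} [Fintype ι] {deg : ι → ℕ} {v w : ℕ} {M N : Matrix ι ι ℂ}
    (hM : DegBand deg v M) (hN : DegBand deg w N) : DegBand deg (v + w) (M * N) := by
  intro j k h
  rw [Matrix.mul_apply]
  refine Finset.sum_eq_zero fun i _ => ?_
  by_cases h1 : (v : ℤ) < |(deg j : ℤ) - (deg i : ℤ)|
  · rw [hM j i h1, zero_mul]
  · have h2 : (w : ℤ) < |(deg i : ℤ) - (deg k : ℤ)| := by
      have := abs_sub_le (deg j : ℤ) (deg i) (deg k)
      push_cast at h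
      linarith
    rw [hN i k h2, mul_zero]

theorem commute_exp_matrix {ι : Type*} [Fintype ι] [DecidableEq ι] {M D : Matrix ι ι ℂ}
    (h : Commute M D) : Commute (NormedSpace.exp M) D := by
  letI : NormedRing (Matrix ι ι ℂ) := Matrix.linftyOpNormedRing
  letI : NormedAlgebra ℂ (Matrix ι ι ℂ) := Matrix.linftyOpNormedAlgebra
  letI : NormedAlgebra ℚ (Matrix ι ι ℂ) := NormedAlgebra.restrictScalars ℚ ℂ _
  exact h.exp_left

theorem degBand_exp {ι : Type*} [Fintype ι] [DecidableEq ι] {deg : ι → ℕ} {A : Matrix ι ι ℂ}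
    (hA : ∀ j k, deg j ≠ deg k → A j k = 0) (c : ℂ) :
    DegBand deg 0 (NormedSpace.exp (c • A)) := by
  intro j k h
  have hc : Commute (c • A) (Matrix.diagonal fun i => (deg i : ℂ)) := by
    ext a b
    rw [Matrix.mul_diagonal, Matrix.diagonal_mul]
    by_cases hab : deg a = deg b
    · rw [hab, mul_comm]
    · simp [hA a b hab]
  have h2 := congrFun (congrFun (commute_exp_matrix hc).eq j) k
  rw [Matrix.mul_diagonal, Matrix.diagonal_mul] at h2
  have hne : (deg j : ℂ) - deg k ≠ 0 := by
    intro h0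
    have h1 : deg j = deg k := by exact_mod_cast sub_eq_zero.1 h0
    simp [h1] at h
  refine (mul_eq_zero.1 (?_ : ((deg j : ℂ) - deg k) * _ = 0)).resolve_left hne
  rw [sub_mul, ← h2]
  ring

theorem exp_unitary {ι : Type*} [Fintype ι] [DecidableEq ι] {A : Matrix ι ι ℂ}
    (hA : A.IsHermitian) (s : ℝ) :
    NormedSpace.exp ((Complex.I * (s : ℂ)) • A) ∈ unitary (Matrix ι ι ℂ) ∧
    NormedSpace.exp ((-(Complex.I * (s : ℂ))) • A) ∈ unitary (Matrix ι ι ℂ) := by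
  have e1 : star (NormedSpace.exp ((Complex.I * (s : ℂ)) • A)) =
      NormedSpace.exp ((-(Complex.I * (s : ℂ))) • A) := by
    rw [Matrix.star_eq_conjTranspose, ← Matrix.exp_conjTranspose, Matrix.conjTranspose_smul, hA.eq]
    simp
  have e2 : NormedSpace.exp ((Complex.I * (s : ℂ)) • A) *
      NormedSpace.exp ((-(Complex.I * (s : ℂ))) • A) = 1 := by
    rw [neg_smul, Matrix.exp_neg]
    exact Matrix.mul_nonsing_inv _ ((Matrix.isUnit_iff_isUnit_det _).1 (Matrix.isUnit_exp _))
  have hu : NormedSpace.exp ((Complex.I * (s : ℂ)) • A) ∈ unitary (Matrix ι ι ℂ) := by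
    rw [Unitary.mem_iff, e1]
    exact ⟨_root_.mul_eq_one_comm.1 e2, e2⟩
  exact ⟨hu, e1 ▸ Unitary.star_mem hu⟩

open scoped Matrix.Norms.L2Operator in
theorem norm_unitary_conj {ι : Type*} [Fintype ι] [DecidableEq ι] {U V : Matrix ι ι ℂ}
    (hU : U ∈ unitary (Matrix ι ι ℂ)) (hV : V ∈ unitary (Matrix ι ι ℂ)) (B : Matrix ι ι ℂ) :
    ‖Matrix.toEuclideanCLM (𝕜 := ℂ) (U * B * V)‖ = ‖Matrix.toEuclideanCLM (𝕜 := ℂ) B‖ := by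
  rw [← Matrix.cstar_norm_def, ← Matrix.cstar_norm_def,
    CStarRing.norm_mul_mem_unitary _ hV, CStarRing.norm_mem_unitary_mul _ hU]

theorem prod_bounds {ι : Type*} [Fintype ι] [DecidableEq ι] {deg : ι → ℕ} {d : ℕ}
    {b : ℝ} (hb : 0 ≤ b) (n : ℕ) (F : Fin n → Matrix ι ι ℂ) (h1 : ∀ k, DegBand deg d (F k))
    (h2 : ∀ k, ‖Matrix.toEuclideanCLM (𝕜 := ℂ) (F k)‖ ≤ b) :
    DegBand deg (n * d) (List.ofFn F).prod ∧
    ‖Matrix.toEuclideanCLM (𝕜 := ℂ) (List.ofFn F).prod‖ ≤ b ^ n := by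
  induction n with
  | zero =>
    constructor
    · intro j k h
      have : j ≠ k := by
        rintro rfl
        simp at h
      simp [this]
    · rw [List.ofFn_zero, List.prod_nil, map_one, pow_zero]
      exact ContinuousLinearMap.norm_id_le
  | succ n ih =>
    obtain ⟨i1, i2⟩ := ih (fun k => F k.succ) (fun k => h1 _) (fun k => h2 _)
    rw [List.ofFn_succ, List.prod_cons]
    constructor
    · have := (h1 0).mul i1
      rwa [show d + n * d = (n + 1) * d by ring] at this
    · rw [map_mul, pow_succ']
      exact (norm_mul_le _ _).trans (mul_le_mul (h2 0) i2 (norm_nonneg _) hb)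

/-- finite-dimensional graded version of Lemma 2 of the paper.
If `A` is Hermitian and preserves the grading `deg`, `B` shifts the grading by at most `d`,
and `φ, ψ` are unit vectors supported in degrees `l` and `l'` respectively, then the
transition amplitude `⟨φ, H(t_n) ⋯ H(t₁) ψ⟩` (with `H(s) = e^{𝕚As} B e^{-𝕚As}`) vanishes
when `n·d < |l - l'|` and in all cases is bounded by `‖B‖ⁿ` in the ℓ² operator norm. -/
theorem interaction_picture_amplitude_bound
    {ι : Type*} [Fintype ι] [DecidableEq ι]
    (deg : ι → ℕ) (d : ℕ) (hd : 1 ≤ d)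
    (A B : Matrix ι ι ℂ) (hA : A.IsHermitian)
    (hAdeg : ∀ j k, deg j ≠ deg k → A j k = 0)
    (hBdeg : ∀ j k, (d : ℤ) < |(deg j : ℤ) - (deg k : ℤ)| → B j k = 0)
    (l l' : ℕ)
    (φ ψ : EuclideanSpace ℂ ι) (hφ : ‖φ‖ = 1) (hψ : ‖ψ‖ = 1)
    (hφsupp : ∀ j, deg j ≠ l → φ j = 0)
    (hψsupp : ∀ j, deg j ≠ l' → ψ j = 0)
    (n : ℕ) (t : Fin n → ℝ) :
    (((n * d : ℕ) : ℤ) < |(l : ℤ) - (l' : ℤ)| →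
      (inner ℂ φ (Matrix.toEuclideanCLM (𝕜 := ℂ)
        ((List.ofFn fun k => interactionPicture A B (t k)).prod) ψ) : ℂ) = 0) ∧
    ‖(inner ℂ φ (Matrix.toEuclideanCLM (𝕜 := ℂ)
        ((List.ofFn fun k => interactionPicture A B (t k)).prod) ψ) : ℂ)‖ ≤
      ‖Matrix.toEuclideanCLM (𝕜 := ℂ) B‖ ^ n := by
  have hH := prod_bounds (deg := deg) (d := d)
    (norm_nonneg (Matrix.toEuclideanCLM (𝕜 := ℂ) B)) n
    (fun k => interactionPicture A B (t k))
    (fun k => by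
      have := ((degBand_exp hAdeg (Complex.I * (t k : ℂ))).mul
        (show DegBand deg d B from hBdeg)).mul (degBand_exp hAdeg (-(Complex.I * (t k : ℂ))))
      simpa [interactionPicture] using this)
    (fun k => (norm_unitary_conj (exp_unitary hA (t k)).1 (exp_unitary hA (t k)).2 B).le)
  obtain ⟨hband, hnorm⟩ := hH
  constructor
  · intro hlt
    rw [PiLp.inner_apply]
    refine Finset.sum_eq_zero fun j _ => ?_
    by_cases hj : deg j = l
    · have hz : (Matrix.toEuclideanCLM (𝕜 := ℂ)
          ((List.ofFn fun k => interactionPicture A B (t k)).prod) ψ) j = 0 := by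
        rw [Matrix.ofLp_toEuclideanCLM, Matrix.mulVec, dotProduct]
        refine Finset.sum_eq_zero fun k _ => ?_
        by_cases hk : deg k = l'
        · rw [hband j k (by rw [hj, hk]; exact hlt), zero_mul]
        · rw [hψsupp k hk, mul_zero]
      rw [hz, inner_zero_right]
    · rw [hφsupp j hj, inner_zero_left]
  · refine (norm_inner_le_norm _ _).trans ?_
    rw [hφ, one_mul]
    refine (ContinuousLinearMap.le_opNorm _ _).trans ?_
    rw [hψ, mul_one]
    exact hnorm
end

section
/- Let ι be a finite type, deg : ι → ℕ, and d ≥ 1. Let A, B ∈ Matrix ι ι ℂ be Hermitian with A_{jk} = 0 whenever deg j ≠ deg k and B_{jk} = 0 whenever |deg j − deg k| > d. Let φ, ψ ∈ ℂ^ι be unit vectors with φ supported on {j : deg j = l} and ψ supported on {j : deg j = l'}, and set n₀ = ⌈|l − l'|/d⌉. Then for every t ∈ ℝ, |⟨φ, e^{−𝕚(A+B)t} ψ⟩| ≤ Σ_{n=n₀}^∞ (|t|·‖B‖)ⁿ/n!; in particular, if n₀ ≥ 2|t|·‖B‖ then |⟨φ, e^{−𝕚(A+B)t} ψ⟩| ≤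 (2/n₀!) · (|t|·‖B‖)^{n₀}. -/
open Matrix

/-- A closed submodule invariant under `T` is invariant under `exp T`. -/
lemma LR_exp_mem {E : Type*} [NormedAddCommGroup E] [InnerProductSpace ℂ E] [CompleteSpace E]
    (T : E →L[ℂ] E) (K : Submodule ℂ E) (hK : IsClosed (K : Set E))
    (hT : ∀ x ∈ K, T x ∈ K) (x : E) (hx : x ∈ K) : NormedSpace.exp T x ∈ K := by
  have h1 := NormedSpace.exp_series_hasSum_exp' (𝕂 := ℂ) T
  have h2 : HasSum (fun n : ℕ => ((n.factorial : ℂ)⁻¹ • T ^ n) x) (NormedSpace.exp T x) :=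
    h1.mapL (ContinuousLinearMap.apply ℂ E x)
  have h3 : ∀ n : ℕ, (T ^ n) x ∈ K := by
    intro n
    induction n with
    | zero => simpa using hx
    | succ n ih =>
      rw [pow_succ']
      exact hT _ ih
  refine hK.mem_of_tendsto h2 (Filter.Eventually.of_forall fun s => ?_)
  exact K.sum_mem fun n _ => K.smul_mem _ (h3 n)

lemma LR_unitary {E : Type*} [NormedAddCommGroup E] [InnerProductSpace ℂ E] [CompleteSpace E]
    (T : E →L[ℂ] E) (hT : star T = -T) : NormedSpace.exp T ∈ unitary (E →L[ℂ] E) := by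
  let _ : NormedAlgebra ℚ (E →L[ℂ] E) := NormedAlgebra.restrictScalars ℚ ℂ _
  exact NormedSpace.exp_mem_unitary_of_mem_skewAdjoint (skewAdjoint.mem_iff.mpr hT)

lemma LR_skew_neg {E : Type*} [NormedAddCommGroup E] [InnerProductSpace ℂ E] [CompleteSpace E]
    (T : E →L[ℂ] E) (hT : star T = -T) : star (-T) = -(-T) := by
  rw [star_neg, hT]

lemma LR_norm_exp {E : Type*} [NormedAddCommGroup E] [InnerProductSpace ℂ E] [CompleteSpace E]
    (T : E →L[ℂ] E) (hT : star T = -T) (x : E) : ‖NormedSpace.exp T x‖ = ‖x‖ :=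
  ContinuousLinearMap.norm_map_of_mem_unitary (LR_unitary T hT) x

/-- Abstract interaction-picture bound. -/
lemma LR_abstract {E : Type*} [NormedAddCommGroup E] [InnerProductSpace ℂ E] [CompleteSpace E]
    (a b : E →L[ℂ] E) (ha : star a = -a) (hb : star b = -b)
    (K : ℕ → Submodule ℂ E) (hK : ∀ n, IsClosed (K n : Set E))
    (haK : ∀ n, ∀ x ∈ K n, a x ∈ K n) (hbK : ∀ n, ∀ x ∈ K (n + 1), b x ∈ K n)
    (ψ : E) (hψ : ∀ n, ∀ x ∈ K (n + 1), (inner ℂ x ψ : ℂ) = 0) (n : ℕ) :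
    ∀ φ ∈ K n, ∀ s ∈ Set.Icc (0 : ℝ) 1,
      ‖(inner ℂ φ (NormedSpace.exp (s • (-a)) (NormedSpace.exp (s • (a + b)) ψ)) : ℂ)‖ ≤
        ‖φ‖ * ‖ψ‖ * ((s * ‖b‖) ^ n / (n.factorial : ℝ)) := by
  have hsk : ∀ (c : E →L[ℂ] E) (hc : star c = -c) (s : ℝ), star (s • c) = -(s • c) := by
    intro c hc s
    rw [star_smul, hc]; simp
  have hna : star (-a) = -(-a) := by rw [star_neg, ha]
  have hab : star (a + b) = -(a + b) := by rw [star_add, ha, hb]; abel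
  induction n with
  | zero =>
    intro φ _ s _
    refine (norm_inner_le_norm _ _).trans ?_
    rw [LR_norm_exp _ (hsk _ hna s), LR_norm_exp _ (hsk _ hab s)]
    simp
  | succ n ih =>
    intro φ hφ s hs
    have hder : ∀ u : ℝ, HasDerivAt
        (fun u : ℝ => (inner ℂ φ
          (NormedSpace.exp (u • (-a)) (NormedSpace.exp (u • (a + b)) ψ)) : ℂ))
        (inner ℂ φ (NormedSpace.exp (u • (-a)) (b (NormedSpace.exp (u • (a + b)) ψ)))) u := by
      intro u
      have h1 := hasDerivAt_exp_smul_const (𝕂 := ℝ) (-a) u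
      have h2 := hasDerivAt_exp_smul_const' (𝕂 := ℝ) (a + b) u
      have h3 := h1.mul h2
      let L : (E →L[ℂ] E) →L[ℝ] ℂ :=
        ((innerSL ℂ φ).comp (ContinuousLinearMap.apply ℂ E ψ)).restrictScalars ℝ
      have h4 := L.hasFDerivAt.comp_hasDerivAt u h3
      have e : NormedSpace.exp (u • -a) * -a * NormedSpace.exp (u • (a + b)) +
          NormedSpace.exp (u • -a) * ((a + b) * NormedSpace.exp (u • (a + b))) =
          NormedSpace.exp (u • -a) * (b * NormedSpace.exp (u • (a + b))) := by
        noncomm_ring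
      rw [e] at h4
      exact h4
    have hB : ∀ u : ℝ, HasDerivAt
        (fun u : ℝ => ‖φ‖ * ‖ψ‖ * ((u * ‖b‖) ^ (n + 1) / ((n + 1).factorial : ℝ)))
        (‖b‖ * ‖φ‖ * ‖ψ‖ * ((u * ‖b‖) ^ n / (n.factorial : ℝ))) u := by
      intro u
      have h := ((((hasDerivAt_id u).mul_const ‖b‖).pow (n + 1)).div_const
        ((n + 1).factorial : ℝ)).const_mul (‖φ‖ * ‖ψ‖)
      refine h.congr_deriv ?_
      have : (n.factorial : ℝ) ≠ 0 := by positivity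
      simp only [id, Nat.factorial_succ, Nat.add_sub_cancel]
      push_cast
      field_simp
    refine image_norm_le_of_norm_deriv_right_le_deriv_boundary (a := (0 : ℝ)) (b := 1)
      (fun u _ => (hder u).continuousAt.continuousWithinAt)
      (fun u _ => (hder u).hasDerivWithinAt) ?_ hB ?_ hs
    · simp [hψ n φ hφ]
    · intro u hu
      -- move the interaction-picture operator to the left entry
      have hstar : ∀ x y : E, (inner ℂ (NormedSpace.exp (u • a) x) y : ℂ)
          = inner ℂ x (NormedSpace.exp (u • (-a)) y) := by
        intro x y
        have : star (NormedSpace.exp (u • a)) = NormedSpace.exp (u • (-a)) := by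
          rw [NormedSpace.star_exp, hsk a ha, smul_neg]
        rw [← this, ContinuousLinearMap.star_eq_adjoint, ContinuousLinearMap.adjoint_inner_right]
      have hbst : ∀ x y : E, (inner ℂ x (b y) : ℂ) = inner ℂ (-(b x)) y := by
        intro x y
        rw [← ContinuousLinearMap.adjoint_inner_left, ← ContinuousLinearMap.star_eq_adjoint, hb]
        rfl
      have hinv : ∀ y : E, NormedSpace.exp (u • a) (NormedSpace.exp (u • (-a)) y) = y := by
        intro y
        have : NormedSpace.exp (u • a) * NormedSpace.exp (u • (-a)) = 1 := by
          let _ : NormedAlgebra ℚ (E →L[ℂ] E) := NormedAlgebra.restrictScalars ℚ ℂ _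
          rw [smul_neg, ← NormedSpace.exp_add_of_commute (Commute.refl (u • a)).neg_right]
          simp
        exact congrArg (fun f : E →L[ℂ] E => f y) this
      have hstar' : ∀ x y : E, (inner ℂ x y : ℂ) =
          inner ℂ (NormedSpace.exp (u • (-a)) x) (NormedSpace.exp (u • (-a)) y) := by
        intro x y
        rw [← hstar, hinv]
      set w := NormedSpace.exp (u • (-a)) (-(b (NormedSpace.exp (u • a) φ))) with hw
      have hexpK : ∀ m, ∀ c : ℝ, ∀ x ∈ K m, NormedSpace.exp (c • a) x ∈ K m := by
        intro m c
        refine LR_exp_mem _ _ (hK m) fun x hx => ?_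
        have : (c • a) x = (c : ℂ) • a x := by simp
        rw [this]
        exact (K m).smul_mem _ (haK m x hx)
      have hwK : w ∈ K n := by
        have : u • (-a) = (-u) • a := by simp
        rw [hw, this]
        exact hexpK n _ _ ((K n).neg_mem (hbK n _ (hexpK _ _ _ hφ)))
      have hwn : ‖w‖ ≤ ‖b‖ * ‖φ‖ := by
        rw [hw, LR_norm_exp _ (hsk _ hna u), norm_neg]
        refine (b.le_opNorm _).trans ?_
        rw [LR_norm_exp _ (hsk _ ha u)]
      rw [← hstar, hbst, hstar', ← hw]
      refine (ih w hwK u ⟨hu.1, hu.2.le⟩).trans ?_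
      have := hu.1
      gcongr

/-- finite-dimensional graded version of Lemma 3 of the paper;
a Lieb–Robinson-type transition-amplitude bound.  If `A, B` are Hermitian, `A` preserves
the grading `deg`, `B` shifts the grading by at most `d`, `φ, ψ` are unit vectors supported
in degrees `l, l'`, and `n₀ = ⌈|l - l'| / d⌉`, then
`|⟨φ, e^{-𝕚(A+B)t} ψ⟩| ≤ ∑_{n ≥ n₀} (|t|‖B‖)ⁿ/n!`, and if moreover `n₀ ≥ 2|t|‖B‖`
then `|⟨φ, e^{-𝕚(A+B)t} ψ⟩| ≤ (2/n₀!)(|t|‖B‖)^{n₀}`. -/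
theorem lieb_robinson_transition_amplitude_bound
    {ι : Type*} [Fintype ι] [DecidableEq ι]
    (deg : ι → ℕ) (d : ℕ) (hd : 1 ≤ d)
    (A B : Matrix ι ι ℂ) (hA : A.IsHermitian) (hB : B.IsHermitian)
    (hAdeg : ∀ j k, deg j ≠ deg k → A j k = 0)
    (hBdeg : ∀ j k, (d : ℤ) < |(deg j : ℤ) - (deg k : ℤ)| → B j k = 0)
    (l l' : ℕ)
    (φ ψ : EuclideanSpace ℂ ι) (hφ : ‖φ‖ = 1) (hψ : ‖ψ‖ = 1)
    (hφsupp : ∀ j, deg j ≠ l → φ j = 0)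
    (hψsupp : ∀ j, deg j ≠ l' → ψ j = 0)
    (n₀ : ℕ) (hn₀ : n₀ = ⌈(((l : ℤ) - (l' : ℤ)).natAbs : ℝ) / (d : ℝ)⌉₊)
    (t : ℝ) :
    ‖(inner ℂ φ (Matrix.toEuclideanCLM (𝕜 := ℂ)
        (NormedSpace.exp ((-(Complex.I * (t : ℂ))) • (A + B))) ψ) : ℂ)‖ ≤
      ∑' n : ℕ, (|t| * ‖Matrix.toEuclideanCLM (𝕜 := ℂ) B‖) ^ (n₀ + n) /
        ((n₀ + n).factorial : ℝ) ∧
    (2 * (|t| * ‖Matrix.toEuclideanCLM (𝕜 := ℂ) B‖) ≤ (n₀ : ℝ) →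
      ‖(inner ℂ φ (Matrix.toEuclideanCLM (𝕜 := ℂ)
          (NormedSpace.exp ((-(Complex.I * (t : ℂ))) • (A + B))) ψ) : ℂ)‖ ≤
        2 / (n₀.factorial : ℝ) * (|t| * ‖Matrix.toEuclideanCLM (𝕜 := ℂ) B‖) ^ n₀) := by
  have hcont : Continuous (Matrix.toEuclideanCLM (n := ι) (𝕜 := ℂ)) := by
    exact LinearMap.continuous_of_finiteDimensional
      ((Matrix.toEuclideanCLM (n := ι) (𝕜 := ℂ)).toAlgEquiv.toLinearMap)
  set T := Matrix.toEuclideanCLM (n := ι) (𝕜 := ℂ) with hT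
  set z : ℂ := -(Complex.I * (t : ℂ)) with hz
  have hzstar : star z = -z := by simp [hz]
  have hznorm : ‖z‖ = |t| := by simp [hz]
  have hexp : T (NormedSpace.exp (z • (A + B))) = NormedSpace.exp (z • T A + z • T B) := by
    have h1 : T (NormedSpace.exp (z • (A + B))) = NormedSpace.exp (T (z • (A + B))) := by
      let _ : SeminormedRing (Matrix ι ι ℂ) := Matrix.linftyOpSemiNormedRing
      let _ : NormedRing (Matrix ι ι ℂ) := Matrix.linftyOpNormedRing
      let _ : NormedAlgebra ℂ (Matrix ι ι ℂ) := Matrix.linftyOpNormedAlgebra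
      let _ : NormedAlgebra ℚ (Matrix ι ι ℂ) := NormedAlgebra.restrictScalars ℚ ℂ _
      exact NormedSpace.map_exp T hcont _
    rw [h1, map_smul, map_add, smul_add]
  have hskew : ∀ M : Matrix ι ι ℂ, M.IsHermitian → star (z • T M) = -(z • T M) := by
    intro M hM
    have : star (T M) = T M := by
      rw [← map_star]
      exact congrArg T hM
    rw [star_smul, this, hzstar]
    exact neg_smul z (T M)
  have happ : ∀ (M : Matrix ι ι ℂ) (x : EuclideanSpace ℂ ι) (j : ι),
      (z • T M) x j = z * ∑ k, M j k * x k := by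
    intro M x j
    rfl
  let K : ℕ → Submodule ℂ (EuclideanSpace ℂ ι) := fun n =>
    { carrier := {x | ∀ j, |(deg j : ℤ) - (l' : ℤ)| ≤ ((n : ℤ) - 1) * d → x j = 0}
      add_mem' := by
        intro x y hx hy j hj
        simp [hx j hj, hy j hj]
      zero_mem' := by
        intro j _
        rfl
      smul_mem' := by
        intro c x hx j hj
        simp [hx j hj] }
  have hsumzero : ∀ (M : Matrix ι ι ℂ) (x : EuclideanSpace ℂ ι) (j : ι),
      (∀ k, M j k = 0 ∨ x k = 0) → (z • T M) x j = 0 := by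
    intro M x j h
    rw [happ, Finset.sum_eq_zero, mul_zero]
    intro k _
    rcases h k with h | h <;> simp [h]
  have haK : ∀ n, ∀ x ∈ K n, (z • T A) x ∈ K n := by
    intro n x hx j hj
    refine hsumzero _ _ _ fun k => ?_
    by_cases hjk : deg j = deg k
    · right
      exact hx k (hjk ▸ hj)
    · left
      exact hAdeg j k hjk
  have hbK : ∀ n, ∀ x ∈ K (n + 1), (z • T B) x ∈ K n := by
    intro n x hx j hj
    refine hsumzero _ _ _ fun k => ?_
    by_cases hjk : (d : ℤ) < |(deg j : ℤ) - (deg k : ℤ)|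
    · left
      exact hBdeg j k hjk
    · right
      refine hx k ?_
      push Not at hjk
      have h1 := abs_sub_le (deg k : ℤ) (deg j) l'
      rw [abs_sub_comm (deg k : ℤ) (deg j : ℤ)] at h1
      push_cast
      linarith
  have hψK : ∀ n, ∀ x ∈ K (n + 1), (inner ℂ x ψ : ℂ) = 0 := by
    intro n x hx
    rw [PiLp.inner_apply]
    refine Finset.sum_eq_zero fun j _ => ?_
    by_cases hj : deg j = l'
    · have : x j = 0 := by
        refine hx j ?_
        rw [hj]
        push_cast
        simp only [sub_self, abs_zero, add_sub_cancel_right]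
        positivity
      simp [this]
    · simp [hψsupp j hj]
  have hφK : φ ∈ K n₀ := by
    intro j hj
    refine hφsupp j fun hjl => ?_
    rw [hjl] at hj
    have hd' : (1 : ℤ) ≤ d := by exact_mod_cast hd
    rcases Nat.eq_zero_or_pos n₀ with h0 | h0
    · rw [h0] at hj
      have := abs_nonneg ((l : ℤ) - l')
      push_cast at hj
      linarith
    · have h1 : n₀ - 1 < ⌈(((l : ℤ) - (l' : ℤ)).natAbs : ℝ) / (d : ℝ)⌉₊ := by omega
      rw [Nat.lt_ceil, lt_div_iff₀ (by exact_mod_cast hd)] at h1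
      have h2 : (n₀ - 1) * d < ((l : ℤ) - (l' : ℤ)).natAbs := by exact_mod_cast h1
      have h3 : (((n₀ - 1) * d : ℕ) : ℤ) < |(l : ℤ) - l'| := by
        rw [Int.abs_eq_natAbs]
        exact_mod_cast h2
      rw [Nat.cast_mul, Nat.cast_sub h0] at h3
      push_cast at h3
      linarith
  have hKc : ∀ n, IsClosed (K n : Set (EuclideanSpace ℂ ι)) := fun n =>
    Submodule.closed_of_finiteDimensional _
  have hnb : ‖z • T B‖ = |t| * ‖T B‖ := by rw [norm_smul, hznorm]
  have hna : star (-(z • T A)) = -(-(z • T A)) :=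
    LR_skew_neg _ (hskew A hA)
  have hmain : ‖(inner ℂ φ (T (NormedSpace.exp (z • (A + B))) ψ) : ℂ)‖ ≤
      (|t| * ‖T B‖) ^ n₀ / (n₀.factorial : ℝ) := by
    rw [hexp]
    have hmem : NormedSpace.exp (-(z • T A)) φ ∈ K n₀ :=
      LR_exp_mem _ _ (hKc n₀) (fun x hx => (K n₀).neg_mem (haK n₀ x hx)) φ hφK
    have h := LR_abstract (z • T A) (z • T B) (hskew A hA) (hskew B hB) K hKc haK hbK ψ hψK n₀
      _ hmem 1 ⟨zero_le_one, le_rfl⟩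
    have hu : NormedSpace.exp (-(z • T A)) ∈ unitary
        (EuclideanSpace ℂ ι →L[ℂ] EuclideanSpace ℂ ι) :=
      LR_unitary _ hna
    rw [LR_norm_exp _ hna, one_smul, one_smul,
      ContinuousLinearMap.inner_map_map_of_mem_unitary hu, hφ, hψ, hnb] at h
    simpa using h
  have hx0 : 0 ≤ |t| * ‖T B‖ := by positivity
  refine ⟨hmain.trans ?_, fun _ => hmain.trans ?_⟩
  · have hs : Summable fun n : ℕ => (|t| * ‖T B‖) ^ (n₀ + n) / ((n₀ + n).factorial : ℝ) := by
      have := (summable_nat_add_iff n₀).mpr (Real.summable_pow_div_factorial (|t| * ‖T B‖))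
      simpa only [add_comm] using this
    have := hs.le_tsum 0 (fun n _ => by positivity)
    simpa using this
  · rw [div_mul_eq_mul_div]
    gcongr
    have := pow_nonneg hx0 n₀
    linarith
end

section
/- With the truncated Fock matrices of Definition 2’s Hamiltonian: for every p ∈ S, the column and the row of f_p indexed by the vacuum configuration 0 (the function n with n_k = 0 for all k) vanish, i.e. (f_p)_{n,0} = 0 and (f_p)_{0,n'} = 0 for all n, n' ∈ B. (This uses Σ_{i∈p} α_{p→i} = 0.) -/
open Finset

/-- Matrix element `⟨a| x̂ |b⟩` of `x̂ = (â + â†)/√2` in the number basis: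
`√(max(a,b)/2)` if `|a - b| = 1`, and `0` otherwise. -/
noncomputable def xiElem (a b : ℕ) : ℂ :=
  if a = b + 1 ∨ b = a + 1 then (Real.sqrt ((max a b : ℝ) / 2) : ℂ) else 0

/-- Matrix element `⟨a| k̂ |b⟩` of `k̂ = 𝕚(â† - â)/√2` in the number basis:
`𝕚 (a - b) √(max(a,b)/2)` if `|a - b| = 1`, and `0` otherwise. -/
noncomputable def kappaElem (a b : ℕ) : ℂ :=
  if a = b + 1 ∨ b = a + 1 then
    Complex.I * ((a : ℂ) - (b : ℂ)) * (Real.sqrt ((max a b : ℝ) / 2) : ℂ)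
  else 0

/-- The truncated occupation-number basis: occupation configurations
`n : Fin N → ℕ` with total occupation number `∑ i, n i ≤ m`. -/
abbrev FockBasis (N m : ℕ) := {n : Fin N → ℕ // ∑ i, n i ≤ m}

instance fockBasisFinite (N m : ℕ) : Finite (FockBasis N m) := by
  have h : ∀ (x : FockBasis N m) (i : Fin N), x.1 i < m + 1 := fun x i =>
    Nat.lt_succ_of_le (le_trans
      (Finset.single_le_sum (f := x.1) (fun _ _ => Nat.zero_le _) (Finset.mem_univ i)) x.2)
  exact Finite.of_injective
    (fun x (i : Fin N) => (⟨x.1 i, h x i⟩ : Fin (m + 1)))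
    (fun a b hab => Subtype.ext (funext fun i => congrArg Fin.val (congrFun hab i)))

noncomputable instance fockBasisFintype (N m : ℕ) : Fintype (FockBasis N m) :=
  Fintype.ofFinite _

/-- The truncated matrix `f_p` of the local term
`∑_{i ∈ p} α_{p→i} k̂_i ∏_{j ∈ p \ {i}} x̂_j` in the occupation-number basis. -/
noncomputable def fockOp (N m : ℕ) (α : Finset (Fin N) → Fin N → ℝ)
    (p : Finset (Fin N)) :
    Matrix (FockBasis N m) (FockBasis N m) ℂ := fun n n' =>
  if ∀ k, k ∉ p → n.1 k = n'.1 k then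
    ∑ i ∈ p, (α p i : ℂ) * kappaElem (n.1 i) (n'.1 i) *
      ∏ j ∈ p.erase i, xiElem (n.1 j) (n'.1 j)
  else 0

/-- The truncated Hamiltonian `H_m = ∑_{p ∈ S} f_p`. -/
noncomputable def fockHam (N m : ℕ) (S : Finset (Finset (Fin N)))
    (α : Finset (Fin N) → Fin N → ℝ) :
    Matrix (FockBasis N m) (FockBasis N m) ℂ :=
  ∑ p ∈ S, fockOp N m α p

theorem fock_kappa_right_zero (a : ℕ) : kappaElem a 0 = Complex.I * xiElem a 0 := by
  unfold kappaElem xiElem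
  by_cases h : a = 1
  · subst h; simp
  · simp [h]

theorem fock_kappa_left_zero (b : ℕ) : kappaElem 0 b = -Complex.I * xiElem 0 b := by
  unfold kappaElem xiElem
  by_cases h : b = 1
  · subst h; simp
  · simp [h]

theorem fockOp_eq_zero_of_kappa (N m : ℕ) (α : Finset (Fin N) → Fin N → ℝ)
    (p : Finset (Fin N)) (hα : ∑ i ∈ p, α p i = 0) (n n' : FockBasis N m) (z : ℂ)
    (hz : ∀ i, kappaElem (n.1 i) (n'.1 i) = z * xiElem (n.1 i) (n'.1 i)) :
    fockOp N m α p n n' = 0 := by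
  unfold fockOp
  split_ifs
  · have h : ∀ i ∈ p, (α p i : ℂ) * kappaElem (n.1 i) (n'.1 i) *
        ∏ j ∈ p.erase i, xiElem (n.1 j) (n'.1 j)
        = (α p i : ℂ) * (z * ∏ j ∈ p, xiElem (n.1 j) (n'.1 j)) := by
      intro i hi
      rw [hz, ← Finset.mul_prod_erase p (fun j => xiElem (n.1 j) (n'.1 j)) hi]
      ring
    rw [Finset.sum_congr rfl h, ← Finset.sum_mul, ← Complex.ofReal_sum, hα]
    simp
  · rfl

/-- The column and the row of the truncated local term `f_p`
indexed by the vacuum configuration vanish (this uses `∑_{i ∈ p} α_{p→i} = 0`). -/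
theorem fockOp_vacuum_row_col_eq_zero
    (N m d c : ℕ)
    (S : Finset (Finset (Fin N)))
    (α : Finset (Fin N) → Fin N → ℝ)
    (hcard : ∀ p ∈ S, 2 ≤ p.card ∧ p.card ≤ d)
    (hcover : ∀ i : Fin N, 1 ≤ (S.filter (fun p => i ∈ p)).card ∧
      (S.filter (fun p => i ∈ p)).card ≤ c)
    (hα : ∀ p ∈ S, ∑ i ∈ p, α p i = 0)
    (p : Finset (Fin N)) (hp : p ∈ S)
    (vac : FockBasis N m) (hvac : ∀ k, vac.1 k = 0)
    (n n' : FockBasis N m) :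
    fockOp N m α p n vac = 0 ∧ fockOp N m α p vac n' = 0 := by
  refine ⟨fockOp_eq_zero_of_kappa N m α p (hα p hp) n vac Complex.I fun i => ?_,
    fockOp_eq_zero_of_kappa N m α p (hα p hp) vac n' (-Complex.I) fun i => ?_⟩
  · rw [hvac]; exact fock_kappa_right_zero _
  · rw [hvac]; exact fock_kappa_left_zero _
end

section
/- With the truncated Fock matrices of Definition 2’s Hamiltonian: for p ∈ S and n, n' ∈ B, if (f_p)_{n,n'} ≠ 0 then n_k = n'_k for all k ∉ p and |n_j − n'_j| = 1 for all j ∈ p; consequently, for any q ∈ S with q ≠ p, (f_p)_{n,n'} ≠ 0 implies (f_q)_{n,n'} = 0, i.e. at most one member of S contributes to any given matrix entry of H_m. -/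
open Finset

/-- A nonzero entry of `f_p` forces agreement off `p` and unit difference on `p`. -/
theorem fockOp_support_aux (N m : ℕ) (α : Finset (Fin N) → Fin N → ℝ)
    (p : Finset (Fin N)) (n n' : FockBasis N m) (hne : fockOp N m α p n n' ≠ 0) :
    (∀ k, k ∉ p → n.1 k = n'.1 k) ∧
    (∀ j ∈ p, n.1 j = n'.1 j + 1 ∨ n'.1 j = n.1 j + 1) := by
  unfold fockOp at hne
  split_ifs at hne with h
  · refine ⟨h, fun j hj => ?_⟩
    by_contra hcon
    apply hne
    refine Finset.sum_eq_zero fun i _ => ?_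
    by_cases hij : j = i
    · subst hij
      simp [kappaElem, hcon]
    · rw [Finset.prod_eq_zero (Finset.mem_erase.mpr ⟨hij, hj⟩), mul_zero]
      simp only [xiElem, if_neg hcon]
  · exact absurd rfl hne

/-- If the `(n, n')` entry of the truncated local term `f_p` is nonzero,
then `n` and `n'` agree outside `p` and differ by exactly one at every site of `p`;
consequently at most one member of `S` contributes to any given matrix entry of `H_m`. -/
theorem fockOp_ne_zero_support
    (N m d c : ℕ)
    (S : Finset (Finset (Fin N)))
    (α : Finset (Fin N) → Fin N → ℝ)
    (hcard : ∀ p ∈ S, 2 ≤ p.card ∧ p.card ≤ d)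
    (hcover : ∀ i : Fin N, 1 ≤ (S.filter (fun p => i ∈ p)).card ∧
      (S.filter (fun p => i ∈ p)).card ≤ c)
    (hα : ∀ p ∈ S, ∑ i ∈ p, α p i = 0)
    (p : Finset (Fin N)) (hp : p ∈ S)
    (n n' : FockBasis N m) (hne : fockOp N m α p n n' ≠ 0) :
    (∀ k, k ∉ p → n.1 k = n'.1 k) ∧
    (∀ j ∈ p, n.1 j = n'.1 j + 1 ∨ n'.1 j = n.1 j + 1) ∧
    (∀ q ∈ S, q ≠ p → fockOp N m α q n n' = 0) := by
  obtain ⟨h1, h2⟩ := fockOp_support_aux N m α p n n' hne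
  refine ⟨h1, h2, fun q _ hqp => ?_⟩
  by_contra hq
  obtain ⟨h3, h4⟩ := fockOp_support_aux N m α q n n' hq
  apply hqp
  ext k
  constructor
  · intro hk
    by_contra hkp
    have := h1 k hkp
    have := h4 k hk
    omega
  · intro hk
    by_contra hkq
    have := h3 k hkq
    have := h2 k hk
    omega
end

section
/- With the truncated Fock matrices of Definition 2’s Hamiltonian: if p ∈ S has exactly two elements, p = {i, j} with i ≠ j (so that α_{p→j} = −α_{p→i}), then f_p conserves the total occupation number: (f_p)_{n,n'} = 0 whenever Σ_k n_k ≠ Σ_k n'_k. -/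
open Finset

/-- If `p = {i, j}` with `i ≠ j` (so `α_{p→j} = -α_{p→i}`),
the truncated local term `f_p` conserves the total occupation number:
`(f_p)_{n,n'} = 0` whenever `∑ k, n k ≠ ∑ k, n' k`. -/
theorem fockOp_pair_conserves_total_occupation
    (N m d c : ℕ)
    (S : Finset (Finset (Fin N)))
    (α : Finset (Fin N) → Fin N → ℝ)
    (hcard : ∀ p ∈ S, 2 ≤ p.card ∧ p.card ≤ d)
    (hcover : ∀ i : Fin N, 1 ≤ (S.filter (fun p => i ∈ p)).card ∧
      (S.filter (fun p => i ∈ p)).card ≤ c)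
    (hα : ∀ p ∈ S, ∑ i ∈ p, α p i = 0)
    (p : Finset (Fin N)) (hp : p ∈ S)
    (i j : Fin N) (hij : i ≠ j) (hpij : p = {i, j})
    (n n' : FockBasis N m) (hsum : ∑ k, n.1 k ≠ ∑ k, n'.1 k) :
    fockOp N m α p n n' = 0 := by
  subst hpij
  unfold fockOp
  split_ifs with h
  · have hαp := hα _ hp
    rw [Finset.sum_pair hij] at hαp
    have hαj : α {i, j} j = - α {i, j} i := by linarith
    have e1 : ({i, j} : Finset (Fin N)).erase i = {j} := by
      ext x; simp only [Finset.mem_erase, Finset.mem_insert, Finset.mem_singleton]; grind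
    have e2 : ({i, j} : Finset (Fin N)).erase j = {i} := by
      ext x; simp only [Finset.mem_erase, Finset.mem_insert, Finset.mem_singleton]; grind
    have hne : n.1 i + n.1 j ≠ n'.1 i + n'.1 j := by
      intro hE
      apply hsum
      rw [← Finset.sum_add_sum_compl {i, j} n.1, ← Finset.sum_add_sum_compl {i, j} n'.1,
        Finset.sum_pair hij, Finset.sum_pair hij, hE]
      congr 1
      exact Finset.sum_congr rfl fun k hk => h k (Finset.mem_compl.mp hk)
    rw [Finset.sum_pair hij, e1, e2, Finset.prod_singleton, Finset.prod_singleton, hαj]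
    generalize n.1 i = a at *
    generalize n.1 j = b at *
    generalize n'.1 i = a' at *
    generalize n'.1 j = b' at *
    unfold kappaElem xiElem
    by_cases h1 : a = a' + 1 ∨ a' = a + 1
    · by_cases h2 : b = b' + 1 ∨ b' = b + 1
      · rw [if_pos h1, if_pos h2, if_pos h1, if_pos h2]
        have hN : a + b' = b + a' := by omega
        have hC : (a : ℂ) + b' = b + a' := by exact_mod_cast hN
        have hD : (a : ℂ) - a' = b - b' := by linear_combination hC
        rw [hD]
        push_cast
        ring
      · simp [h2]
    · simp [h1]
  · rfl
end

section
/- Sparsity part of Lemma 1: with the truncated Fock matrices of Definition 2’s Hamiltonian, for every n ∈ B the number of n' ∈ B with (H_m)_{n,n'} ≠ 0 is at most c · 2^d · m; i.e., the matrix H_m is (c·2^d·m)-sparse. -/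
open Finset

lemma kappaElem_up (a : ℕ) : kappaElem a (a + 1) = -Complex.I * xiElem a (a + 1) := by
  unfold kappaElem xiElem
  simp

lemma adj_of_xi {a b : ℕ} (h : xiElem a b ≠ 0) : a = b + 1 ∨ b = a + 1 := by
  unfold xiElem at h
  by_contra hc
  exact h (if_neg hc)

lemma adj_of_kappa {a b : ℕ} (h : kappaElem a b ≠ 0) : a = b + 1 ∨ b = a + 1 := by
  unfold kappaElem at h
  by_contra hc
  exact h (if_neg hc)

/-- A nonzero entry of `f_p` changes exactly the modes in `p` by one and lowers at least one. -/
lemma fockOp_ne_zero (N m : ℕ) (α : Finset (Fin N) → Fin N → ℝ) (p : Finset (Fin N))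
    (hα : ∑ i ∈ p, α p i = 0) (n n' : FockBasis N m) (h : fockOp N m α p n n' ≠ 0) :
    (∀ k, k ∉ p → n.1 k = n'.1 k) ∧
    (∀ j ∈ p, n.1 j = n'.1 j + 1 ∨ n'.1 j = n.1 j + 1) ∧ ∃ j ∈ p, n.1 j = n'.1 j + 1 := by
  unfold fockOp at h
  split_ifs at h with hk
  · have hadj : ∀ j ∈ p, n.1 j = n'.1 j + 1 ∨ n'.1 j = n.1 j + 1 := by
      obtain ⟨i, hi, hne⟩ := Finset.exists_ne_zero_of_sum_ne_zero h
      intro j hj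
      by_cases hji : j = i
      · subst hji
        exact adj_of_kappa (right_ne_zero_of_mul (left_ne_zero_of_mul hne))
      · exact adj_of_xi (Finset.prod_ne_zero_iff.mp (right_ne_zero_of_mul hne) j
          (Finset.mem_erase.mpr ⟨hji, hj⟩))
    refine ⟨hk, hadj, ?_⟩
    by_contra! hno
    apply h
    have hup : ∀ j ∈ p, n'.1 j = n.1 j + 1 := fun j hj => (hadj j hj).resolve_left (hno j hj)
    have : ∀ i ∈ p, (α p i : ℂ) * kappaElem (n.1 i) (n'.1 i) *
        ∏ j ∈ p.erase i, xiElem (n.1 j) (n'.1 j)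
        = (α p i : ℂ) * (-Complex.I * ∏ j ∈ p, xiElem (n.1 j) (n'.1 j)) := by
      intro i hi
      rw [← Finset.mul_prod_erase p _ hi, hup i hi, kappaElem_up]
      ring
    rw [Finset.sum_congr rfl this, ← Finset.sum_mul, ← Complex.ofReal_sum, hα]
    simp
  · exact absurd rfl h

/-- sparsity part of Lemma 1 of the paper.  The truncated Hamiltonian
`H_m` is `(c · 2^d · m)`-sparse: every row has at most `c · 2^d · m` nonzero entries. -/
theorem fockHam_sparsity
    (N m d c : ℕ)
    (S : Finset (Finset (Fin N)))
    (α : Finset (Fin N) → Fin N → ℝ)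
    (hcard : ∀ p ∈ S, 2 ≤ p.card ∧ p.card ≤ d)
    (hcover : ∀ i : Fin N, 1 ≤ (S.filter (fun p => i ∈ p)).card ∧
      (S.filter (fun p => i ∈ p)).card ≤ c)
    (hα : ∀ p ∈ S, ∑ i ∈ p, α p i = 0)
    (n : FockBasis N m) :
    {n' : FockBasis N m | fockHam N m S α n n' ≠ 0}.ncard ≤ c * 2 ^ d * m := by
  classical
  let g : Finset (Fin N) → Finset (Fin N) → Fin N → ℕ := fun p T k =>
    if k ∈ p then (if k ∈ T then n.1 k + 1 else n.1 k - 1) else n.1 k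
  let I : Finset (Fin N) := Finset.univ.filter (fun i => 1 ≤ n.1 i)
  let F : Finset (Fin N → ℕ) := I.biUnion fun i =>
    (S.filter (fun p => i ∈ p)).biUnion fun p => p.powerset.image (g p)
  have hI : I.card ≤ m := by
    calc I.card = ∑ i ∈ I, 1 := by simp
      _ ≤ ∑ i ∈ I, n.1 i := Finset.sum_le_sum fun i hi => (Finset.mem_filter.mp hi).2
      _ ≤ ∑ i, n.1 i := Finset.sum_le_sum_of_subset (Finset.subset_univ _)
      _ ≤ m := n.2
  have hF : F.card ≤ m * (c * 2 ^ d) := by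
    refine (Finset.card_biUnion_le_card_mul I _ (c * 2 ^ d) fun i _ => ?_).trans
      (Nat.mul_le_mul_right _ hI)
    refine (Finset.card_biUnion_le_card_mul _ _ (2 ^ d) fun p hp => ?_).trans
      (Nat.mul_le_mul_right _ (hcover i).2)
    refine Finset.card_image_le.trans ?_
    rw [Finset.card_powerset]
    exact Nat.pow_le_pow_right (by norm_num) (hcard p (Finset.mem_filter.mp hp).1).2
  rw [← Set.ncard_image_of_injective _ Subtype.val_injective]
  have hsub : (Set.image Subtype.val {n' : FockBasis N m | fockHam N m S α n n' ≠ 0})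
      ⊆ (F : Set (Fin N → ℕ)) := by
    rintro _ ⟨n', hn', rfl⟩
    have hn' : fockHam N m S α n n' ≠ 0 := hn'
    unfold fockHam at hn'
    rw [Matrix.sum_apply] at hn'
    obtain ⟨p, hp, hne⟩ := Finset.exists_ne_zero_of_sum_ne_zero hn'
    obtain ⟨h1, h2, j, hj, hj'⟩ := fockOp_ne_zero N m α p (hα p hp) n n' hne
    rw [Finset.mem_coe]
    refine Finset.mem_biUnion.mpr ⟨j, Finset.mem_filter.mpr ⟨Finset.mem_univ _, by omega⟩, ?_⟩
    refine Finset.mem_biUnion.mpr ⟨p, Finset.mem_filter.mpr ⟨hp, hj⟩, ?_⟩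
    refine Finset.mem_image.mpr ⟨p.filter (fun k => n'.1 k = n.1 k + 1),
      Finset.mem_powerset.mpr (Finset.filter_subset _ _), ?_⟩
    funext k
    simp only [g, Finset.mem_filter]
    by_cases hk : k ∈ p
    · have := h2 k hk
      simp only [hk, true_and, if_true]
      split_ifs <;> omega
    · simp only [hk, if_false]
      exact h1 k hk
  calc _ ≤ (F : Set (Fin N → ℕ)).ncard := Set.ncard_le_ncard hsub F.finite_toSet
    _ = F.card := Set.ncard_coe_finset F
    _ ≤ m * (c * 2 ^ d) := hF
    _ = c * 2 ^ d * m := by ring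
end

section
/- Unranking step for multiset combinations (core of Lemma 4): let N ≥ 0 and m ≥ 1 be natural numbers and let M = C(N+m, m) (binomial coefficient, the number of multisets of size m from N+1 symbols). Then for every natural number i with i < M, there exists a unique a ∈ {0, 1, …, N} such that C(N+m−a−1, m) ≤ i < C(N+m−a, m); equivalently, the N+1 intervals [C(N+m−a−1, m), C(N+m−a, m)) for a = 0, …, N are pairwise disjoint, nonempty, and their union is {0, 1, …, M−1}. (Here C(m−1, m) = 0.) -/
/-- unranking step for multiset combinations, core of Lemma 4 of the
paper.  For `m ≥ 1` and any index `i < C(N+m, m)`, there is a unique `a ∈ {0, …, N}`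
with `C(N+m-a-1, m) ≤ i < C(N+m-a, m)`; i.e. the `N+1` intervals
`[C(N+m-a-1, m), C(N+m-a, m))` are pairwise disjoint, nonempty, and partition
`{0, …, C(N+m, m) - 1}`.  (Here `C(m-1, m) = 0`.) -/
theorem multiset_combination_unranking_step
    (N m : ℕ) (hm : 1 ≤ m) (i : ℕ) (hi : i < (N + m).choose m) :
    ∃! a : ℕ, a ≤ N ∧ (N + m - a - 1).choose m ≤ i ∧ i < (N + m - a).choose m := by
  have hN : ∃ a : ℕ, (N + m - a - 1).choose m ≤ i := by
    refine ⟨N, ?_⟩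
    rw [Nat.choose_eq_zero_of_lt (by omega)]
    exact Nat.zero_le _
  have key : ∀ a b : ℕ, a < b → (N + m - a - 1).choose m ≤ i →
      i < (N + m - b).choose m → False := by
    intro a b hab h1 h2
    have h3 : (N + m - b).choose m ≤ (N + m - a - 1).choose m :=
      Nat.choose_le_choose m (by omega)
    omega
  classical
  refine ⟨Nat.find hN, ⟨?_, Nat.find_spec hN, ?_⟩, ?_⟩
  · apply Nat.find_min'
    rw [Nat.choose_eq_zero_of_lt (by omega)]
    exact Nat.zero_le _
  · rcases Nat.eq_zero_or_pos (Nat.find hN) with h0 | h0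
    · rw [h0]
      exact hi
    · have h := Nat.find_min hN (m := Nat.find hN - 1) (by omega)
      rw [show N + m - (Nat.find hN - 1) - 1 = N + m - Nat.find hN by omega] at h
      omega
  · rintro b ⟨_, hb1, hb2⟩
    rcases lt_trichotomy b (Nat.find hN) with h | h | h
    · exact absurd hb1 (Nat.find_min hN h)
    · exact h
    · exact (key _ _ h (Nat.find_spec hN) hb2).elim
end
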